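/- Let (E^•, I_•, ∫) be a Cheeger–Simons model over 𝕂 and k ≥ 0, and let Q^{k+1}(CS) = {(ω, [u]) ∈ E^{k+1} × H^{k+1}(I^•) : dω = 0 and Φ_*[u] = [ω̃] in H^{k+1}(F^•)}. Then there is a short exact sequence of abelian groups 0 → H^k(F^•)/Φ_*(H^k(I^•)) → Diff^k(CS) → Q^{k+1}(CS) → 0, where the first map sends the class of a δ-closed a ∈ F^k to (q∘a')|_{Z_k(I_•)} for the unique closed a' = α̃ with α ∈ E^k and [α̃] = [a] (via the de Rham isomorphism), and the second map is (δ₁, δ₂). -/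

import Mathlib

open AddSubgroup

noncomputable section

/-- Cycles of an `ℕ`-indexed chain complex, with the convention `Z_0 = I_0`
(i.e. `∂ : I_0 → I_{-1} = 0`). -/
def Zc {I : ℕ → Type*} [∀ i, AddCommGroup (I i)] (bd : ∀ k, I (k+1) →+ I k) :
    ∀ k, AddSubgroup (I k)
  | 0 => ⊤
  | n+1 => (bd n).ker

theorem mem_Zc_bd {I : ℕ → Type*} [∀ i, AddCommGroup (I i)] (bd : ∀ k, I (k+1) →+ I k)
    (hbd : ∀ k x, bd k (bd (k+1) x) = 0) :
    ∀ (k : ℕ) (β : I (k+1)), bd k β ∈ Zc bd k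
  | 0, _ => mem_top _
  | n+1, β => by simpa [Zc, AddMonoidHom.mem_ker] using hbd n β

/-- Coboundaries of an `ℕ`-indexed cochain complex, with the convention
`B^0 = 0`. -/
def Bc {E : ℕ → Type*} [∀ i, AddCommGroup (E i)] (d : ∀ k, E k →+ E (k+1)) :
    ∀ k, AddSubgroup (E k)
  | 0 => ⊥
  | n+1 => (d n).range

/-- Cohomology of an `ℕ`-indexed cochain complex. -/
abbrev Hc {E : ℕ → Type*} [∀ i, AddCommGroup (E i)] (d : ∀ k, E k →+ E (k+1)) (k : ℕ) :=
  ↥(d k).ker ⧸ ((Bc d k).addSubgroupOf (d k).ker)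

/-- The class of a cocycle in cohomology. -/
def Hmk {E : ℕ → Type*} [∀ i, AddCommGroup (E i)] (d : ∀ k, E k →+ E (k+1)) (k : ℕ) :
    ↥(d k).ker →+ Hc d k := QuotientAddGroup.mk' _

/-- The codifferential on `Hom(I_•, A)` induced by the boundary map of `I_•`. -/
def codiff {I : ℕ → Type*} [∀ i, AddCommGroup (I i)] (bd : ∀ k, I (k+1) →+ I k)
    (A : Type*) [AddCommGroup A] (k : ℕ) : (I k →+ A) →+ (I (k+1) →+ A) :=
  AddMonoidHom.mk' (fun h => h.comp (bd k)) (fun h g => by ext x; simp)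

/-- `ℤ` regarded as an additive subgroup of `𝕂`. -/
def intSub (𝕂 : Type*) [Field 𝕂] : AddSubgroup 𝕂 := zmultiples (1 : 𝕂)

/-- The group `𝕂/ℤ`. -/
abbrev KmodZ (𝕂 : Type*) [Field 𝕂] := 𝕂 ⧸ intSub 𝕂

/-- The quotient map `q : 𝕂 → 𝕂/ℤ`. -/
def qZ (𝕂 : Type*) [Field 𝕂] : 𝕂 →+ KmodZ 𝕂 := QuotientAddGroup.mk' _

/-- The inclusion `Φ : Hom(I_k, ℤ) → Hom(I_k, 𝕂)`. -/
def PhiMap {I : ℕ → Type*} [∀ i, AddCommGroup (I i)] (𝕂 : Type*) [Field 𝕂] (k : ℕ) :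
    (I k →+ ℤ) →+ (I k →+ 𝕂) :=
  AddMonoidHom.mk' (fun h => (Int.castAddHom 𝕂).comp h) (fun a b => by ext x; simp)

/-- The differential character group `Diff^k` of a Cheeger–Simons model. -/
def DiffChar {𝕂 : Type*} [Field 𝕂] {I E : ℕ → Type*}
    [∀ i, AddCommGroup (I i)] [∀ i, AddCommGroup (E i)]
    (bd : ∀ k, I (k+1) →+ I k) (hbd : ∀ k x, bd k (bd (k+1) x) = 0)
    (pair : ∀ k, E k →+ (I k →+ 𝕂)) (k : ℕ) :
    AddSubgroup ((Zc bd k) →+ KmodZ 𝕂) where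
  carrier := {f | ∃ ω : E (k+1), ∀ β : I (k+1),
      f ⟨bd k β, mem_Zc_bd bd hbd k β⟩ = qZ 𝕂 (pair (k+1) ω β)}
  add_mem' := by
    rintro f g ⟨ω, hω⟩ ⟨ω', hω'⟩
    exact ⟨ω + ω', fun β => by
      simp [AddMonoidHom.add_apply, hω β, hω' β]⟩
  zero_mem' := ⟨0, fun β => by simp [qZ]⟩
  neg_mem' := by
    rintro f ⟨ω, hω⟩
    exact ⟨-ω, fun β => by simp [AddMonoidHom.neg_apply, hω β]⟩

/-- The subgroup `E^k_0` of closed elements of `E^k` with integral periods. -/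
def Ezero {𝕂 : Type*} [Field 𝕂] {I E : ℕ → Type*}
    [∀ i, AddCommGroup (I i)] [∀ i, AddCommGroup (E i)]
    (bd : ∀ k, I (k+1) →+ I k) (d : ∀ k, E k →+ E (k+1))
    (pair : ∀ k, E k →+ (I k →+ 𝕂)) (k : ℕ) : AddSubgroup (E k) where
  carrier := {ω | d k ω = 0 ∧ ∀ α ∈ Zc bd k, pair k ω α ∈ intSub 𝕂}
  add_mem' := by
    rintro ω ω' ⟨h1, h2⟩ ⟨h1', h2'⟩
    refine ⟨by simp [h1, h1'], fun α hα => ?_⟩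
    simpa [AddMonoidHom.add_apply] using add_mem (h2 α hα) (h2' α hα)
  zero_mem' := ⟨by simp, fun α _ => by simp [zero_mem]⟩
  neg_mem' := by
    rintro ω ⟨h1, h2⟩
    exact ⟨by simp [h1], fun α hα => by
      simpa [AddMonoidHom.neg_apply] using neg_mem (h2 α hα)⟩

/-!
A differential character lifts to a *differential cocycle*: a triple `(T, ω, c)` of a `𝕂`-cochain
`T`, a form `ω` and an integral cocycle `c` with `δT = ω̃ - c`. Lifting uses that `I_k` is
projective and that `𝕂/ℤ` is divisible. On triples, `δ₁` and `δ₂` are the projections to `ω` and to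
`[c]`, so surjectivity onto `Q^{k+1}` is immediate: `ω̃ - u` being exact says precisely that some
`(T, ω, u)` is a differential cocycle.

Everything else rests on one exactness statement: a `𝕂`-cochain with integral values on cycles is
an integral cochain plus a coboundary. It identifies the kernel of `H^k(F^•) → Diff^k`, and it shows
that a triple inducing the zero character has `T = u + b` with `b` a coboundary, whence
`ω̃ = c + δu` is integral, so that `ω = 0` and `[c] = 0`; thus `δ₁` and `δ₂` descend to characters.
-/

section Coefficients

variable {𝕂 : Type*} [Field 𝕂] {M N A : Type*} [AddCommGroup M] [AddCommGroup N] [AddCommGroup A]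

theorem qZ_surjective : Function.Surjective (qZ 𝕂) :=
  QuotientAddGroup.mk'_surjective _

theorem qZ_eq_zero_iff {x : 𝕂} : qZ 𝕂 x = 0 ↔ x ∈ intSub 𝕂 :=
  QuotientAddGroup.eq_zero_iff x

theorem exists_qZ_comp_eq [Module.Projective ℤ M] (f : M →+ KmodZ 𝕂) :
    ∃ T : M →+ 𝕂, (qZ 𝕂).comp T = f := by
  obtain ⟨T, hT⟩ := Module.projective_lifting_property (qZ 𝕂).toIntLinearMap f.toIntLinearMap
    qZ_surjective
  exact ⟨T.toAddMonoidHom, congrArg LinearMap.toAddMonoidHom hT⟩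

instance divisibleByKmodZ [CharZero 𝕂] : DivisibleBy (KmodZ 𝕂) ℤ :=
  qZ_surjective.divisibleBy _ fun x n => map_zsmul (qZ 𝕂) n x

theorem exists_comp_eq_of_ker_le [DivisibleBy A ℤ] (g : M →+ N) (h : M →+ A)
    (hgh : g.ker ≤ h.ker) : ∃ G : N →+ A, G.comp g = h := by
  obtain ⟨G, hG⟩ := (Module.Baer.of_divisible A).extension_property_addMonoidHom
    (QuotientAddGroup.kerLift g) (QuotientAddGroup.kerLift_injective g)
    (QuotientAddGroup.lift g.ker h hgh)
  exact ⟨G, AddMonoidHom.ext fun x => DFunLike.congr_fun hG (x : M ⧸ g.ker)⟩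

end Coefficients

section Cohomology

variable {E : ℕ → Type*} [∀ i, AddCommGroup (E i)]

theorem Hmk_surjective (d : ∀ k, E k →+ E (k + 1)) (k : ℕ) : Function.Surjective (Hmk d k) :=
  QuotientAddGroup.mk'_surjective _

theorem Hmk_eq_zero_iff {d : ∀ k, E k →+ E (k + 1)} {k : ℕ} {z : (d k).ker} :
    Hmk d k z = 0 ↔ (z : E k) ∈ Bc d k :=
  (QuotientAddGroup.eq_zero_iff z).trans AddSubgroup.mem_addSubgroupOf

end Cohomology

section Cochains

variable {𝕂 : Type*} [Field 𝕂] {A : Type*} [AddCommGroup A]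
  {I : ℕ → Type*} [∀ i, AddCommGroup (I i)] (bd : ∀ k, I (k + 1) →+ I k) {k : ℕ}

theorem qZ_comp_PhiMap (u : I k →+ ℤ) : (qZ 𝕂).comp (PhiMap 𝕂 k u) = 0 :=
  AddMonoidHom.ext fun x => qZ_eq_zero_iff.2 (intCast_mem_zmultiples_one (u x))

theorem PhiMap_injective [CharZero 𝕂] :
    Function.Injective (PhiMap 𝕂 k : (I k →+ ℤ) →+ (I k →+ 𝕂)) := fun _ _ h =>
  AddMonoidHom.ext fun x => Int.cast_injective (DFunLike.congr_fun h x)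

theorem exists_PhiMap_eq [CharZero 𝕂] {h : I k →+ 𝕂} (hh : (qZ 𝕂).comp h = 0) :
    ∃ u : I k →+ ℤ, PhiMap 𝕂 k u = h := by
  have hrange (x : I k) : h x ∈ (Int.castAddHom 𝕂).range := by
    rw [Int.range_castAddHom]
    exact qZ_eq_zero_iff.1 (DFunLike.congr_fun hh x)
  have hcast : Function.Injective (Int.castAddHom 𝕂) := Int.cast_injective
  refine ⟨(AddMonoidHom.ofInjective hcast).symm.toAddMonoidHom.comp (h.codRestrict _ hrange), ?_⟩
  ext x
  exact AddMonoidHom.apply_ofInjective_symm hcast ⟨h x, hrange x⟩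

theorem codiff_PhiMap (u : I k →+ ℤ) :
    codiff bd 𝕂 k (PhiMap 𝕂 k u) = PhiMap 𝕂 (k + 1) (codiff bd ℤ k u) :=
  rfl

variable {bd}

theorem codiff_codiff (hbd : ∀ k x, bd k (bd (k + 1) x) = 0) (h : I k →+ A) :
    codiff bd A (k + 1) (codiff bd A k h) = 0 :=
  AddMonoidHom.ext fun x => (congrArg h (hbd k x)).trans (map_zero h)

theorem apply_eq_zero_of_mem_Bc_codiff :
    ∀ {k : ℕ} {h : I k →+ A}, h ∈ Bc (codiff bd A) k → ∀ x ∈ Zc bd k, h x = 0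
  | 0, _, hh, x, _ => DFunLike.congr_fun (AddSubgroup.mem_bot.1 hh) x
  | _ + 1, _, ⟨g, hg⟩, _, hx => hg ▸ (congrArg g hx).trans (map_zero g)

theorem codiff_eq_zero_of_mem_Bc_codiff (hbd : ∀ k x, bd k (bd (k + 1) x) = 0) {h : I k →+ A}
    (hh : h ∈ Bc (codiff bd A) k) : codiff bd A k h = 0 :=
  AddMonoidHom.ext fun β => apply_eq_zero_of_mem_Bc_codiff hh _ (mem_Zc_bd bd hbd k β)

theorem mem_Bc_codiff_of_apply_eq_zero [DivisibleBy A ℤ] :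
    ∀ {k : ℕ} {h : I k →+ A}, (∀ x ∈ Zc bd k, h x = 0) → h ∈ Bc (codiff bd A) k
  | 0, _, hh => AddSubgroup.mem_bot.2 (AddMonoidHom.ext fun x => hh x (mem_top x))
  | n + 1, h, hh => exists_comp_eq_of_ker_le (bd n) h hh

theorem exists_mem_Bc_codiff_qZ_comp_eq [∀ i, Module.Projective ℤ (I i)] :
    ∀ {k : ℕ} {g : I k →+ KmodZ 𝕂}, g ∈ Bc (codiff bd (KmodZ 𝕂)) k →
      ∃ b ∈ Bc (codiff bd 𝕂) k, (qZ 𝕂).comp b = g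
  | 0, _, hg => ⟨0, zero_mem _, by rw [AddSubgroup.mem_bot.1 hg, AddMonoidHom.comp_zero]⟩
  | n + 1, _, ⟨g, hg⟩ => by
    obtain ⟨T, rfl⟩ := exists_qZ_comp_eq g
    exact ⟨codiff bd 𝕂 n T, ⟨T, rfl⟩, hg⟩

end Cochains

section Characters

variable {𝕂 : Type*} [Field 𝕂] {I E : ℕ → Type*}
  [∀ i, AddCommGroup (I i)] [∀ i, AddCommGroup (E i)]

/-- The character `(q ∘ T)|_{Z_k}` on cycles induced by a cochain `T ∈ Hom(I_k, 𝕂)`. -/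
def cycleCharacter (𝕂 : Type*) [Field 𝕂] (bd : ∀ k, I (k + 1) →+ I k) (k : ℕ) :
    (I k →+ 𝕂) →+ (Zc bd k →+ KmodZ 𝕂) :=
  AddMonoidHom.mk' (fun T => (qZ 𝕂).comp (T.comp (Zc bd k).subtype))
    (fun T T' => by ext x; simp)

variable {bd : ∀ k, I (k + 1) →+ I k} {hbd : ∀ k x, bd k (bd (k + 1) x) = 0}
  {d : ∀ k, E k →+ E (k + 1)} {pair : ∀ k, E k →+ (I k →+ 𝕂)} {k : ℕ}

theorem cycleCharacter_surjective [CharZero 𝕂] [Module.Projective ℤ (I k)] :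
    Function.Surjective (cycleCharacter 𝕂 bd k) := fun f => by
  obtain ⟨F, rfl⟩ := (Module.Baer.of_divisible (KmodZ 𝕂)).extension_property_addMonoidHom
    (Zc bd k).subtype Subtype.val_injective f
  obtain ⟨T, rfl⟩ := exists_qZ_comp_eq F
  exact ⟨T, rfl⟩

theorem cycleCharacter_PhiMap (u : I k →+ ℤ) : cycleCharacter 𝕂 bd k (PhiMap 𝕂 k u) = 0 :=
  AddMonoidHom.ext fun x => DFunLike.congr_fun (qZ_comp_PhiMap u) (x : I k)

theorem cycleCharacter_add_PhiMap (T : I k →+ 𝕂) (u : I k →+ ℤ) :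
    cycleCharacter 𝕂 bd k (T + PhiMap 𝕂 k u) = cycleCharacter 𝕂 bd k T :=
  AddMonoidHom.ext fun x => (map_add (qZ 𝕂) _ _).trans <|
    add_eq_left.2 (DFunLike.congr_fun (qZ_comp_PhiMap u) (x : I k))

theorem cycleCharacter_eq_of_sub_mem_Bc {a b : I k →+ 𝕂} (hab : a - b ∈ Bc (codiff bd 𝕂) k) :
    cycleCharacter 𝕂 bd k a = cycleCharacter 𝕂 bd k b :=
  AddMonoidHom.ext fun x =>
    congrArg (qZ 𝕂) (sub_eq_zero.1 (apply_eq_zero_of_mem_Bc_codiff hab x x.2))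

theorem cycleCharacter_eq_zero_iff [CharZero 𝕂] [∀ i, Module.Projective ℤ (I i)]
    {a : I k →+ 𝕂} :
    cycleCharacter 𝕂 bd k a = 0 ↔ ∃ u : I k →+ ℤ, a - PhiMap 𝕂 k u ∈ Bc (codiff bd 𝕂) k := by
  constructor
  · intro ha
    have hqa : (qZ 𝕂).comp a ∈ Bc (codiff bd (KmodZ 𝕂)) k :=
      mem_Bc_codiff_of_apply_eq_zero fun x hx => DFunLike.congr_fun ha ⟨x, hx⟩
    obtain ⟨b, hb, hqb⟩ := exists_mem_Bc_codiff_qZ_comp_eq hqa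
    obtain ⟨u, hu⟩ : ∃ u : I k →+ ℤ, PhiMap 𝕂 k u = a - b :=
      exists_PhiMap_eq (by rw [AddMonoidHom.comp_sub, hqb, sub_self])
    exact ⟨u, by rwa [hu, sub_sub_cancel]⟩
  · rintro ⟨u, hu⟩
    exact (cycleCharacter_eq_of_sub_mem_Bc hu).trans (cycleCharacter_PhiMap u)

theorem cycleCharacter_apply_bd (hbd : ∀ k x, bd k (bd (k + 1) x) = 0)
    {T : I k →+ 𝕂} {ω : E (k + 1)} {c : I (k + 1) →+ ℤ}
    (hT : codiff bd 𝕂 k T = pair (k + 1) ω - PhiMap 𝕂 (k + 1) c) (β : I (k + 1)) :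
    cycleCharacter 𝕂 bd k T ⟨bd k β, mem_Zc_bd bd hbd k β⟩ = qZ 𝕂 (pair (k + 1) ω β) := by
  calc qZ 𝕂 (codiff bd 𝕂 k T β)
      = qZ 𝕂 (pair (k + 1) ω β) - (qZ 𝕂).comp (PhiMap 𝕂 (k + 1) c) β := by
        rw [hT]
        exact map_sub (qZ 𝕂) _ _
    _ = qZ 𝕂 (pair (k + 1) ω β) := by
        rw [qZ_comp_PhiMap, AddMonoidHom.zero_apply, sub_zero]

/-- The map `H^k(F^•) → Diff^k`, sending the class of a closed cochain `a` to `(q ∘ a)|_{Z_k}`.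
Any representative of the class may be used, in particular `α̃` for a closed form `α`. -/
def flatCharacter (bd : ∀ k, I (k + 1) →+ I k) (hbd : ∀ k x, bd k (bd (k + 1) x) = 0)
    (pair : ∀ k, E k →+ (I k →+ 𝕂)) (k : ℕ) : Hc (codiff bd 𝕂) k →+ DiffChar bd hbd pair k :=
  QuotientAddGroup.lift _
    (((cycleCharacter 𝕂 bd k).comp (codiff bd 𝕂 k).ker.subtype).codRestrict (DiffChar bd hbd pair k)
      fun a => ⟨0, cycleCharacter_apply_bd hbd (c := 0)
        ((AddMonoidHom.mem_ker.1 a.2).trans (by simp only [map_zero, sub_zero]))⟩)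
    fun _ ha => Subtype.ext <| (cycleCharacter_eq_of_sub_mem_Bc (b := 0)
      (by rw [sub_zero]; exact AddSubgroup.mem_addSubgroupOf.1 ha)).trans (map_zero _)

theorem coe_flatCharacter_Hmk (a : (codiff bd 𝕂 k).ker) :
    (flatCharacter bd hbd pair k (Hmk (codiff bd 𝕂) k a) : Zc bd k →+ KmodZ 𝕂)
      = cycleCharacter 𝕂 bd k a :=
  rfl

theorem coe_flatCharacter_Hmk_of_sub_mem_Bc (a : (codiff bd 𝕂 k).ker) {b : I k →+ 𝕂}
    (hab : (a : I k →+ 𝕂) - b ∈ Bc (codiff bd 𝕂) k) :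
    (flatCharacter bd hbd pair k (Hmk (codiff bd 𝕂) k a) : Zc bd k →+ KmodZ 𝕂)
      = cycleCharacter 𝕂 bd k b :=
  cycleCharacter_eq_of_sub_mem_Bc hab

theorem flatCharacter_Hmk_eq_zero_iff [CharZero 𝕂] [∀ i, Module.Projective ℤ (I i)]
    (a : (codiff bd 𝕂 k).ker) :
    flatCharacter bd hbd pair k (Hmk (codiff bd 𝕂) k a) = 0 ↔
      ∃ u : I k →+ ℤ, u ∈ (codiff bd ℤ k).ker ∧
        (a : I k →+ 𝕂) - PhiMap 𝕂 k u ∈ Bc (codiff bd 𝕂) k := by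
  rw [← ZeroMemClass.coe_eq_zero, coe_flatCharacter_Hmk, cycleCharacter_eq_zero_iff]
  refine exists_congr fun u => (and_iff_right_of_imp fun hu => PhiMap_injective (𝕂 := 𝕂) ?_).symm
  have hδ := codiff_eq_zero_of_mem_Bc_codiff hbd hu
  rwa [map_sub, a.2, zero_sub, neg_eq_zero, codiff_PhiMap, ← map_zero (PhiMap 𝕂 (k + 1))] at hδ

/-- Differential cocycles in the sense of Hopkins and Singer: triples `(T, ω, c)` of a cochain
`T ∈ Hom(I_k, 𝕂)`, a form `ω ∈ E^{k + 1}` and an integral cocycle `c` with `δT = ω̃ - c`. They serve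
as lifts of differential characters. -/
def DiffCocycle (bd : ∀ k, I (k + 1) →+ I k) (pair : ∀ k, E k →+ (I k →+ 𝕂)) (k : ℕ) :
    AddSubgroup ((I k →+ 𝕂) × E (k + 1) × (codiff bd ℤ (k + 1)).ker) where
  carrier := {x | codiff bd 𝕂 k x.1 = pair (k + 1) x.2.1 - PhiMap 𝕂 (k + 1) x.2.2}
  add_mem' {x y} hx hy := by
    simp only [Set.mem_ofPred_eq] at hx hy ⊢
    simp only [Prod.fst_add, Prod.snd_add, AddSubgroup.coe_add, map_add, hx, hy]
    abel
  zero_mem' := by simp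
  neg_mem' {x} hx := by
    simp only [Set.mem_ofPred_eq] at hx ⊢
    simp only [Prod.fst_neg, Prod.snd_neg, AddSubgroup.coe_neg, map_neg, hx]
    abel

namespace DiffCocycle

/-- The differential character `(q ∘ T)|_{Z_k}` induced by a differential cocycle `(T, ω, c)`. -/
def toDiffChar (bd : ∀ k, I (k + 1) →+ I k) (hbd : ∀ k x, bd k (bd (k + 1) x) = 0)
    (pair : ∀ k, E k →+ (I k →+ 𝕂)) (k : ℕ) : DiffCocycle bd pair k →+ DiffChar bd hbd pair k :=
  ((cycleCharacter 𝕂 bd k).comp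
      ((AddMonoidHom.fst _ _).comp (DiffCocycle bd pair k).subtype)).codRestrict _
    fun x => ⟨x.1.2.1, cycleCharacter_apply_bd hbd x.2⟩

/-- The form `ω` of a differential cocycle `(T, ω, c)`. -/
def form (bd : ∀ k, I (k + 1) →+ I k) (pair : ∀ k, E k →+ (I k →+ 𝕂)) (k : ℕ) :
    DiffCocycle bd pair k →+ E (k + 1) :=
  (AddMonoidHom.fst _ _).comp ((AddMonoidHom.snd _ _).comp (DiffCocycle bd pair k).subtype)

/-- The integral cohomology class `[c]` of a differential cocycle `(T, ω, c)`. -/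
def integralClass (bd : ∀ k, I (k + 1) →+ I k) (pair : ∀ k, E k →+ (I k →+ 𝕂)) (k : ℕ) :
    DiffCocycle bd pair k →+ Hc (codiff bd ℤ) (k + 1) :=
  (Hmk (codiff bd ℤ) (k + 1)).comp
    ((AddMonoidHom.snd _ _).comp ((AddMonoidHom.snd _ _).comp (DiffCocycle bd pair k).subtype))

theorem pair_d_eq_PhiMap_codiff (hbd : ∀ k x, bd k (bd (k + 1) x) = 0)
    (stokes : ∀ (k : ℕ) (e : E k) (α : I (k + 1)), pair k e (bd k α) = pair (k + 1) (d k e) α)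
    {T : I k →+ 𝕂} {ω : E (k + 1)} {c : I (k + 1) →+ ℤ}
    (hT : codiff bd 𝕂 k T = pair (k + 1) ω - PhiMap 𝕂 (k + 1) c) :
    pair (k + 2) (d (k + 1) ω) = PhiMap 𝕂 (k + 2) (codiff bd ℤ (k + 1) c) := by
  have hδ := congrArg (codiff bd 𝕂 (k + 1)) hT
  rw [codiff_codiff hbd, map_sub, eq_comm, sub_eq_zero, codiff_PhiMap] at hδ
  exact (AddMonoidHom.ext (stokes (k + 1) ω)).symm.trans hδ

theorem exists_pair_form_eq_PhiMap [CharZero 𝕂] [∀ i, Module.Projective ℤ (I i)]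
    {x : DiffCocycle bd pair k} (hx : toDiffChar bd hbd pair k x = 0) :
    ∃ u : I k →+ ℤ, pair (k + 1) (form bd pair k x)
      = PhiMap 𝕂 (k + 1) ((x.1.2.2 : I (k + 1) →+ ℤ) + codiff bd ℤ k u) := by
  obtain ⟨u, hu⟩ : ∃ u : I k →+ ℤ, x.1.1 - PhiMap 𝕂 k u ∈ Bc (codiff bd 𝕂) k :=
    cycleCharacter_eq_zero_iff.1 (congrArg Subtype.val hx)
  refine ⟨u, ?_⟩
  have hδ := codiff_eq_zero_of_mem_Bc_codiff hbd hu
  rw [map_sub, sub_eq_zero, x.2, sub_eq_iff_eq_add', codiff_PhiMap] at hδ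
  rwa [map_add]

section IntegralPeriods

variable (int_triv : ∀ (k : ℕ) (e : E k), (∀ β : I k, pair k e β ∈ intSub 𝕂) → e = 0)

include int_triv

theorem eq_zero_of_pair_eq_PhiMap {e : E k} {u : I k →+ ℤ} (h : pair k e = PhiMap 𝕂 k u) :
    e = 0 :=
  int_triv k e fun β => h ▸ intCast_mem_zmultiples_one (u β)

variable [CharZero 𝕂] [∀ i, Module.Projective ℤ (I i)]

theorem ker_toDiffChar_le_ker_form :
    (toDiffChar bd hbd pair k).ker ≤ (form bd pair k).ker := fun _ hx =>
  let ⟨_, hu⟩ := exists_pair_form_eq_PhiMap hx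
  eq_zero_of_pair_eq_PhiMap int_triv hu

theorem ker_toDiffChar_le_ker_integralClass :
    (toDiffChar bd hbd pair k).ker ≤ (integralClass bd pair k).ker := fun x hx => by
  obtain ⟨u, hu⟩ := exists_pair_form_eq_PhiMap hx
  have hcu : (x.1.2.2 : I (k + 1) →+ ℤ) + codiff bd ℤ k u = 0 := PhiMap_injective (𝕂 := 𝕂) <| by
    rw [← hu, eq_zero_of_pair_eq_PhiMap int_triv hu, map_zero, map_zero]
  exact (Hmk_eq_zero_iff (d := codiff bd ℤ) (k := k + 1) (z := x.1.2.2)).2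
    ⟨-u, by rw [map_neg, eq_neg_of_add_eq_zero_left hcu]⟩

theorem toDiffChar_surjective
    (stokes : ∀ (k : ℕ) (e : E k) (α : I (k + 1)), pair k e (bd k α) = pair (k + 1) (d k e) α) :
    Function.Surjective (toDiffChar bd hbd pair k) := by
  rintro ⟨f, ω, hω⟩
  obtain ⟨T, rfl⟩ := cycleCharacter_surjective f
  obtain ⟨c, hc⟩ : ∃ c : I (k + 1) →+ ℤ, PhiMap 𝕂 (k + 1) c = pair (k + 1) ω - codiff bd 𝕂 k T :=
    exists_PhiMap_eq <| AddMonoidHom.ext fun β =>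
      (map_sub (qZ 𝕂) _ _).trans (sub_eq_zero.2 (hω β).symm)
  have hT : codiff bd 𝕂 k T = pair (k + 1) ω - PhiMap 𝕂 (k + 1) c := by rw [hc, sub_sub_cancel]
  have hdω := pair_d_eq_PhiMap_codiff hbd stokes hT
  have hδc : codiff bd ℤ (k + 1) c = 0 := PhiMap_injective (𝕂 := 𝕂) <| by
    rw [← hdω, eq_zero_of_pair_eq_PhiMap int_triv hdω, map_zero, map_zero]
  exact ⟨⟨(T, ω, ⟨c, hδc⟩), hT⟩, rfl⟩

end IntegralPeriods
end DiffCocycle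

section CurvatureAndClass

variable [CharZero 𝕂] [∀ i, Module.Projective ℤ (I i)]
  (int_triv : ∀ (k : ℕ) (e : E k), (∀ β : I k, pair k e β ∈ intSub 𝕂) → e = 0)
  (stokes : ∀ (k : ℕ) (e : E k) (α : I (k + 1)), pair k e (bd k α) = pair (k + 1) (d k e) α)

/-- The curvature `δ₁ : Diff^k → E^{k+1}`, induced by `(T, ω, c) ↦ ω` on differential cocycles. -/
def curvature : DiffChar bd hbd pair k →+ E (k + 1) :=
  (DiffCocycle.toDiffChar bd hbd pair k).liftOfSurjective
    (DiffCocycle.toDiffChar_surjective int_triv stokes)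
    ⟨DiffCocycle.form bd pair k, DiffCocycle.ker_toDiffChar_le_ker_form int_triv⟩

/-- The characteristic class `δ₂ : Diff^k → H^{k+1}(I^•)`, induced by `(T, ω, c) ↦ [c]` on
differential cocycles. -/
def characteristicClass : DiffChar bd hbd pair k →+ Hc (codiff bd ℤ) (k + 1) :=
  (DiffCocycle.toDiffChar bd hbd pair k).liftOfSurjective
    (DiffCocycle.toDiffChar_surjective int_triv stokes)
    ⟨DiffCocycle.integralClass bd pair k, DiffCocycle.ker_toDiffChar_le_ker_integralClass int_triv⟩

theorem curvature_toDiffChar (x : DiffCocycle bd pair k) :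
    curvature int_triv stokes (DiffCocycle.toDiffChar bd hbd pair k x) = x.1.2.1 :=
  AddMonoidHom.liftOfRightInverse_comp_apply _ _ _ _ x

theorem characteristicClass_toDiffChar (x : DiffCocycle bd pair k) :
    characteristicClass int_triv stokes (DiffCocycle.toDiffChar bd hbd pair k x)
      = Hmk (codiff bd ℤ) (k + 1) x.1.2.2 :=
  AddMonoidHom.liftOfRightInverse_comp_apply _ _ _ _ x

theorem apply_bd_eq_qZ_curvature (f : DiffChar bd hbd pair k) (β : I (k + 1)) :
    (f : Zc bd k →+ KmodZ 𝕂) ⟨bd k β, mem_Zc_bd bd hbd k β⟩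
      = qZ 𝕂 (pair (k + 1) (curvature int_triv stokes f) β) := by
  obtain ⟨x, rfl⟩ := DiffCocycle.toDiffChar_surjective int_triv stokes f
  rw [curvature_toDiffChar]
  exact cycleCharacter_apply_bd hbd x.2 β

theorem d_curvature (f : DiffChar bd hbd pair k) :
    d (k + 1) (curvature int_triv stokes f) = 0 := by
  obtain ⟨x, rfl⟩ := DiffCocycle.toDiffChar_surjective int_triv stokes f
  rw [curvature_toDiffChar]
  exact DiffCocycle.eq_zero_of_pair_eq_PhiMap int_triv
    (DiffCocycle.pair_d_eq_PhiMap_codiff hbd stokes x.2)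

theorem characteristicClass_eq_Hmk {f : DiffChar bd hbd pair k} {T : I k →+ 𝕂} {ω : E (k + 1)}
    {c : (codiff bd ℤ (k + 1)).ker} (hf : cycleCharacter 𝕂 bd k T = f)
    (hT : codiff bd 𝕂 k T = pair (k + 1) ω - PhiMap 𝕂 (k + 1) c) :
    characteristicClass int_triv stokes f = Hmk (codiff bd ℤ) (k + 1) c := by
  obtain rfl : DiffCocycle.toDiffChar bd hbd pair k ⟨(T, ω, c), hT⟩ = f := Subtype.ext hf
  exact characteristicClass_toDiffChar int_triv stokes _

theorem exists_characteristicClass_eq_Hmk_and_sub_mem_Bc (f : DiffChar bd hbd pair k) :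
    ∃ c : (codiff bd ℤ (k + 1)).ker,
      characteristicClass int_triv stokes f = Hmk (codiff bd ℤ) (k + 1) c ∧
      pair (k + 1) (curvature int_triv stokes f) - PhiMap 𝕂 (k + 1) c
        ∈ Bc (codiff bd 𝕂) (k + 1) := by
  obtain ⟨x, rfl⟩ := DiffCocycle.toDiffChar_surjective int_triv stokes f
  refine ⟨x.1.2.2, characteristicClass_toDiffChar int_triv stokes x, x.1.1, ?_⟩
  rw [curvature_toDiffChar]
  exact x.2

theorem exists_curvature_eq_and_characteristicClass_eq {ω : E (k + 1)}
    {c : (codiff bd ℤ (k + 1)).ker}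
    (h : pair (k + 1) ω - PhiMap 𝕂 (k + 1) c ∈ Bc (codiff bd 𝕂) (k + 1)) :
    ∃ f : DiffChar bd hbd pair k, curvature int_triv stokes f = ω ∧
      characteristicClass int_triv stokes f = Hmk (codiff bd ℤ) (k + 1) c :=
  let ⟨T, hT⟩ := h
  let x : DiffCocycle bd pair k := ⟨(T, ω, c), hT⟩
  ⟨DiffCocycle.toDiffChar bd hbd pair k x, curvature_toDiffChar int_triv stokes x,
    characteristicClass_toDiffChar int_triv stokes x⟩

theorem curvature_eq_zero_and_characteristicClass_eq_zero_iff (f : DiffChar bd hbd pair k) :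
    curvature int_triv stokes f = 0 ∧ characteristicClass int_triv stokes f = 0 ↔
      f ∈ (flatCharacter bd hbd pair k).range := by
  constructor
  · obtain ⟨x, rfl⟩ := DiffCocycle.toDiffChar_surjective int_triv stokes f
    rw [curvature_toDiffChar, characteristicClass_toDiffChar, Hmk_eq_zero_iff]
    rintro ⟨hω, u, hu⟩
    have hclosed : codiff bd 𝕂 k (x.1.1 + PhiMap 𝕂 k u) = 0 := by
      rw [map_add, x.2, codiff_PhiMap, hu, hω, map_zero, zero_sub, neg_add_cancel]
    refine ⟨Hmk (codiff bd 𝕂) k ⟨x.1.1 + PhiMap 𝕂 k u, hclosed⟩, Subtype.ext ?_⟩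
    exact cycleCharacter_add_PhiMap x.1.1 u
  · rintro ⟨h, rfl⟩
    obtain ⟨a, rfl⟩ := Hmk_surjective _ _ h
    let x : DiffCocycle bd pair k :=
      ⟨(a, 0, 0), (AddMonoidHom.mem_ker.1 a.2).trans (by simp)⟩
    have hx : DiffCocycle.toDiffChar bd hbd pair k x
      = flatCharacter bd hbd pair k (Hmk (codiff bd 𝕂) k a) := rfl
    rw [← hx, curvature_toDiffChar, characteristicClass_toDiffChar]
    exact ⟨rfl, map_zero _⟩

end CurvatureAndClass
end Characters

theorem statement6_general
    {𝕂 : Type*} [Field 𝕂] [CharZero 𝕂]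
    (I E : ℕ → Type*)
    [∀ i, AddCommGroup (I i)] [∀ i, Module.Projective ℤ (I i)]
    [∀ i, AddCommGroup (E i)]
    (bd : ∀ k, I (k + 1) →+ I k)
    (hbd : ∀ k x, bd k (bd (k + 1) x) = 0)
    (d : ∀ k, E k →+ E (k + 1))
    (pair : ∀ k, E k →+ (I k →+ 𝕂))
    (int_triv : ∀ (k : ℕ) (e : E k), (∀ β : I k, pair k e β ∈ intSub 𝕂) → e = 0)
    (stokes : ∀ (k : ℕ) (e : E k) (α : I (k + 1)), pair k e (bd k α) = pair (k + 1) (d k e) α)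
    (k : ℕ) :
    ∃ (ι : Hc (codiff bd 𝕂) k →+ ↥(DiffChar bd hbd pair k))
      (δ₁ : ↥(DiffChar bd hbd pair k) →+ E (k + 1))
      (δ₂ : ↥(DiffChar bd hbd pair k) →+ Hc (codiff bd ℤ) (k + 1)),
      (∀ (a : I k →+ 𝕂) (ha : a ∈ (codiff bd 𝕂 k).ker) (b : I k →+ 𝕂),
          a - b ∈ Bc (codiff bd 𝕂) k →
          ((ι (Hmk (codiff bd 𝕂) k ⟨a, ha⟩)) : ↥(Zc bd k) →+ KmodZ 𝕂)
            = (qZ 𝕂).comp (b.comp (Zc bd k).subtype)) ∧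
      (∀ (a : I k →+ 𝕂) (ha : a ∈ (codiff bd 𝕂 k).ker),
          ι (Hmk (codiff bd 𝕂) k ⟨a, ha⟩) = 0 ↔
            ∃ u : I k →+ ℤ, u ∈ (codiff bd ℤ k).ker ∧
              a - PhiMap 𝕂 k u ∈ Bc (codiff bd 𝕂) k) ∧
      (∀ (f : ↥(DiffChar bd hbd pair k)) (β : I (k + 1)),
          (f : ↥(Zc bd k) →+ KmodZ 𝕂) ⟨bd k β, mem_Zc_bd bd hbd k β⟩
            = qZ 𝕂 (pair (k + 1) (δ₁ f) β)) ∧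
      (∀ (f : ↥(DiffChar bd hbd pair k)) (T : I k →+ 𝕂) (ω : E (k + 1))
          (c : I (k + 1) →+ ℤ) (hc : c ∈ (codiff bd ℤ (k + 1)).ker),
          (∀ x : ↥(Zc bd k), qZ 𝕂 (T x) = (f : ↥(Zc bd k) →+ KmodZ 𝕂) x) →
          codiff bd 𝕂 k T = pair (k + 1) ω - PhiMap 𝕂 (k + 1) c →
          δ₂ f = Hmk (codiff bd ℤ) (k + 1) ⟨c, hc⟩) ∧
      (∀ f, d (k + 1) (δ₁ f) = 0 ∧
        ∃ (u : I (k + 1) →+ ℤ) (hu : u ∈ (codiff bd ℤ (k + 1)).ker),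
          δ₂ f = Hmk (codiff bd ℤ) (k + 1) ⟨u, hu⟩ ∧
          pair (k + 1) (δ₁ f) - PhiMap 𝕂 (k + 1) u ∈ Bc (codiff bd 𝕂) (k + 1)) ∧
      (∀ (ω : E (k + 1)) (u : I (k + 1) →+ ℤ) (hu : u ∈ (codiff bd ℤ (k + 1)).ker),
          d (k + 1) ω = 0 →
          pair (k + 1) ω - PhiMap 𝕂 (k + 1) u ∈ Bc (codiff bd 𝕂) (k + 1) →
          ∃ f, δ₁ f = ω ∧ δ₂ f = Hmk (codiff bd ℤ) (k + 1) ⟨u, hu⟩) ∧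
      (∀ f, (δ₁ f = 0 ∧ δ₂ f = 0) ↔ f ∈ ι.range) := by
  refine ⟨flatCharacter bd hbd pair k, curvature int_triv stokes,
    characteristicClass int_triv stokes,
    fun a ha b hab => coe_flatCharacter_Hmk_of_sub_mem_Bc ⟨a, ha⟩ hab,
    fun a ha => flatCharacter_Hmk_eq_zero_iff ⟨a, ha⟩,
    apply_bd_eq_qZ_curvature int_triv stokes,
    fun f T ω c hc hf hT => characteristicClass_eq_Hmk int_triv stokes (c := ⟨c, hc⟩)
      (AddMonoidHom.ext hf) hT,
    fun f => ⟨d_curvature int_triv stokes f, ?_⟩,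
    fun ω u hu _ hωu => exists_curvature_eq_and_characteristicClass_eq int_triv stokes
      (c := ⟨u, hu⟩) hωu,
    curvature_eq_zero_and_characteristicClass_eq_zero_iff int_triv stokes⟩
  obtain ⟨c, hc⟩ := exists_characteristicClass_eq_Hmk_and_sub_mem_Bc int_triv stokes f
  exact ⟨c, c.2, hc⟩

/-- With `Q^{k+1}(𝒞𝒮) = {(ω, [u]) : dω = 0, Φ_*[u] = [ω̃]}`, there is a
short exact sequence `0 → H^k(F^•)/Φ_*(H^k(I^•)) → Diff^k(𝒞𝒮) → Q^{k+1}(𝒞𝒮) → 0`, where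
the first map sends the class of a `δ`-closed `a ∈ F^k` to `(q ∘ α̃)|_{Z_k}` for the
closed `α ∈ E^k` with `[α̃] = [a]`, and the second map is `(δ₁, δ₂)`. -/
theorem statement6
    {𝕂 : Type*} [Field 𝕂] [CharZero 𝕂]
    (I E : ℕ → Type*)
    [∀ i, AddCommGroup (I i)] [∀ i, Module.Free ℤ (I i)]
    [∀ i, AddCommGroup (E i)] [∀ i, Module 𝕂 (E i)]
    (bd : ∀ k, I (k+1) →+ I k)
    (hbd : ∀ k x, bd k (bd (k+1) x) = 0)
    (d : ∀ k, E k →+ E (k+1))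
    (hd : ∀ k x, d (k+1) (d k x) = 0)
    (hdsmul : ∀ (k : ℕ) (c : 𝕂) (e : E k), d k (c • e) = c • d k e)
    (pair : ∀ k, E k →+ (I k →+ 𝕂))
    (pair_smul : ∀ (k : ℕ) (c : 𝕂) (e : E k) (x : I k), pair k (c • e) x = c * pair k e x)
    (pair_injE : ∀ k, Function.Injective (pair k))
    (pair_injI : ∀ (k : ℕ) (x y : I k), (∀ e : E k, pair k e x = pair k e y) → x = y)
    (int_triv : ∀ (k : ℕ) (e : E k), (∀ β : I k, pair k e β ∈ intSub 𝕂) → e = 0)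
    (stokes : ∀ (k : ℕ) (e : E k) (α : I (k+1)), pair k e (bd k α) = pair (k+1) (d k e) α)
    (deRham_inj : ∀ (k : ℕ) (e : E k), d k e = 0 → pair k e ∈ Bc (codiff bd 𝕂) k → e ∈ Bc d k)
    (deRham_surj : ∀ (k : ℕ) (h : I k →+ 𝕂), codiff bd 𝕂 k h = 0 →
      ∃ e : E k, d k e = 0 ∧ h - pair k e ∈ Bc (codiff bd 𝕂) k)
    (k : ℕ) :
    ∃ (ι : Hc (codiff bd 𝕂) k →+ ↥(DiffChar bd hbd pair k))
      (δ₁ : ↥(DiffChar bd hbd pair k) →+ E (k+1))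
      (δ₂ : ↥(DiffChar bd hbd pair k) →+ Hc (codiff bd ℤ) (k+1)),
      (∀ (a : I k →+ 𝕂) (ha : a ∈ (codiff bd 𝕂 k).ker) (α : E k), d k α = 0 →
          a - pair k α ∈ Bc (codiff bd 𝕂) k →
          ((ι (Hmk (codiff bd 𝕂) k ⟨a, ha⟩)) : ↥(Zc bd k) →+ KmodZ 𝕂)
            = (qZ 𝕂).comp ((pair k α).comp (Zc bd k).subtype)) ∧
      (∀ (a : I k →+ 𝕂) (ha : a ∈ (codiff bd 𝕂 k).ker),
          ι (Hmk (codiff bd 𝕂) k ⟨a, ha⟩) = 0 ↔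
            ∃ u : I k →+ ℤ, u ∈ (codiff bd ℤ k).ker ∧
              a - PhiMap 𝕂 k u ∈ Bc (codiff bd 𝕂) k) ∧
      (∀ (f : ↥(DiffChar bd hbd pair k)) (β : I (k+1)),
          (f : ↥(Zc bd k) →+ KmodZ 𝕂) ⟨bd k β, mem_Zc_bd bd hbd k β⟩
            = qZ 𝕂 (pair (k+1) (δ₁ f) β)) ∧
      (∀ (f : ↥(DiffChar bd hbd pair k)) (T : I k →+ 𝕂) (ω : E (k+1))
          (c : I (k+1) →+ ℤ) (hc : c ∈ (codiff bd ℤ (k+1)).ker),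
          (∀ x : ↥(Zc bd k), qZ 𝕂 (T x) = (f : ↥(Zc bd k) →+ KmodZ 𝕂) x) →
          codiff bd 𝕂 k T = pair (k+1) ω - PhiMap 𝕂 (k+1) c →
          δ₂ f = Hmk (codiff bd ℤ) (k+1) ⟨c, hc⟩) ∧
      (∀ f, d (k+1) (δ₁ f) = 0 ∧
        ∃ (u : I (k+1) →+ ℤ) (hu : u ∈ (codiff bd ℤ (k+1)).ker),
          δ₂ f = Hmk (codiff bd ℤ) (k+1) ⟨u, hu⟩ ∧
          pair (k+1) (δ₁ f) - PhiMap 𝕂 (k+1) u ∈ Bc (codiff bd 𝕂) (k+1)) ∧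
      (∀ (ω : E (k+1)) (u : I (k+1) →+ ℤ) (hu : u ∈ (codiff bd ℤ (k+1)).ker),
          d (k+1) ω = 0 →
          pair (k+1) ω - PhiMap 𝕂 (k+1) u ∈ Bc (codiff bd 𝕂) (k+1) →
          ∃ f, δ₁ f = ω ∧ δ₂ f = Hmk (codiff bd ℤ) (k+1) ⟨u, hu⟩) ∧
      (∀ f, (δ₁ f = 0 ∧ δ₂ f = 0) ↔ f ∈ ι.range) := by
  obtain ⟨ι, δ₁, δ₂, hι, hexact⟩ := statement6_general I E bd hbd d pair int_triv stokes k
  exact ⟨ι, δ₁, δ₂, fun a ha α _ => hι a ha (pair k α), hexact⟩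

end
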